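/- The Hausdorff moment problem is ill-posed of type I in the sense of Nashed: the operator A : L²(0,1) → ℓ², (Ax)ⱼ = ∫₀¹ t^{j−1}x(t)dt, has non-closed range and is non-compact (equivalently, its range contains an infinite-dimensional closed subspace). -/

import Mathlib

open MeasureTheory

/-- Normalised indicator function of `(a, b]`, in `L²(0,1)`. -/
noncomputable def psiInd (a b c : ℝ) : Lp ℝ 2 (volume.restrict (Set.Ioo (0:ℝ) 1)) :=
  indicatorConstLp 2 (measurableSet_Ioc : MeasurableSet (Set.Ioc a b)) (measure_ne_top _ _) c

lemma psiInd_measure {a b : ℝ} (ha : 0 ≤ a) (hab : a ≤ b) (hb : b < 1) :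
    (volume.restrict (Set.Ioo (0:ℝ) 1)).real (Set.Ioc a b) = b - a := by
  rw [measureReal_restrict_apply measurableSet_Ioc]
  have : Set.Ioc a b ∩ Set.Ioo 0 1 = Set.Ioc a b := by
    apply Set.inter_eq_left.2
    intro t ht
    exact ⟨lt_of_le_of_lt ha ht.1, lt_of_le_of_lt ht.2 hb⟩
  rw [this]
  simp [hab]

lemma psiInd_inner_self {a b r : ℝ} (ha : 0 ≤ a) (hr : 0 < r) (hab : b - a = r ^ 2) (hb : b < 1) :
    ‖psiInd a b r⁻¹‖ = 1 := by
  have hle : a ≤ b := by nlinarith [sq_nonneg r]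
  have h : ‖psiInd a b r⁻¹‖ ^ 2 = 1 := by
    rw [← real_inner_self_eq_norm_sq]
    unfold psiInd
    rw [L2.inner_indicatorConstLp_indicatorConstLp, Set.inter_self, psiInd_measure ha hle hb, hab]
    simp
    field_simp
  exact (pow_eq_one_iff_of_nonneg (norm_nonneg _) two_ne_zero).1 h

lemma psiInd_inner_disj {a b c a' b' c' : ℝ} (h : b ≤ a') :
    inner ℝ (psiInd a b c) (psiInd a' b' c') = 0 := by
  unfold psiInd
  rw [L2.inner_indicatorConstLp_indicatorConstLp]
  have : Set.Ioc a b ∩ Set.Ioc a' b' = ∅ := by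
    ext t
    simp only [Set.mem_inter_iff, Set.mem_Ioc, Set.mem_empty_iff_false, iff_false]
    intro ht
    linarith [ht.1.2, ht.2.1]
  simp [this]

lemma psiInd_moment {a b r : ℝ} (ha : 0 ≤ a) (hr : 0 < r) (hab : b - a = r ^ 2) (hb : b < 1)
    (j : ℕ) :
    r * a ^ j ≤ (∫ t in Set.Ioo (0:ℝ) 1, t ^ j * psiInd a b r⁻¹ t) ∧
    (∫ t in Set.Ioo (0:ℝ) 1, t ^ j * psiInd a b r⁻¹ t) ≤ r * b ^ j := by
  have hle : a ≤ b := by nlinarith [sq_nonneg r]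
  have e : (∫ t in Set.Ioo (0:ℝ) 1, t ^ j * psiInd a b r⁻¹ t) =
      ∫ t in Set.Ioc a b, t ^ j * r⁻¹ := by
    have h1 : (fun t : ℝ => t ^ j * psiInd a b r⁻¹ t) =ᵐ[volume.restrict (Set.Ioo (0:ℝ) 1)]
        (Set.Ioc a b).indicator (fun t => t ^ j * r⁻¹) := by
      have h0 : (psiInd a b r⁻¹ : ℝ → ℝ) =ᵐ[volume.restrict (Set.Ioo (0:ℝ) 1)] _ :=
        indicatorConstLp_coeFn (p := 2)
          (hs := (measurableSet_Ioc : MeasurableSet (Set.Ioc a b))) (c := r⁻¹)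
      filter_upwards [h0] with t ht
      rw [ht]
      by_cases h : t ∈ Set.Ioc a b <;> simp [h]
    rw [integral_congr_ae h1, setIntegral_indicator measurableSet_Ioc]
    congr 2
    apply Set.inter_eq_right.2
    intro t ht
    exact ⟨lt_of_le_of_lt ha ht.1, lt_of_le_of_lt ht.2 hb⟩
  have hi : IntegrableOn (fun t : ℝ => t ^ j * r⁻¹) (Set.Ioc a b) :=
    (Continuous.integrableOn_Icc (by fun_prop)).mono_set Set.Ioc_subset_Icc_self
  have hc : ∀ c : ℝ, (∫ _t in Set.Ioc a b, c ^ j * r⁻¹) = r * c ^ j := by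
    intro c
    rw [setIntegral_const]
    simp only [Real.volume_real_Ioc_of_le hle, hab, smul_eq_mul]
    field_simp
  rw [e]
  constructor
  · rw [← hc a]
    apply setIntegral_mono_on (integrableOn_const (by simp)) hi measurableSet_Ioc
    intro t ht
    have := ht.1.le
    gcongr
  · rw [← hc b]
    apply setIntegral_mono_on hi (integrableOn_const (by simp)) measurableSet_Ioc
    intro t ht
    have h1 := ht.2
    have : 0 ≤ t := ha.trans ht.1.le
    gcongr

/-- Injectivity: an `L²` function all of whose moments vanish is zero. -/
lemma moments_zero (x : Lp ℝ 2 (volume.restrict (Set.Ioo (0:ℝ) 1)))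
    (h : ∀ j : ℕ, (∫ t in Set.Ioo (0:ℝ) 1, t ^ j * x t) = 0) : x = 0 := by
  have hint : Integrable x (volume.restrict (Set.Ioo (0:ℝ) 1)) :=
    (Lp.memLp x).integrable (by norm_num)
  have hmul : ∀ g : ℝ → ℝ, Continuous g →
      Integrable (fun t => g t * x t) (volume.restrict (Set.Ioo (0:ℝ) 1)) := by
    intro g hg
    obtain ⟨C, hC⟩ := isCompact_Icc.exists_bound_of_continuousOn (s := Set.Icc (0:ℝ) 1)
      hg.continuousOn
    refine hint.bdd_mul (c := C) hg.aestronglyMeasurable ?_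
    filter_upwards [ae_restrict_mem measurableSet_Ioo] with t ht
    exact hC t ⟨ht.1.le, ht.2.le⟩
  have hpoly : ∀ p : Polynomial ℝ, (∫ t in Set.Ioo (0:ℝ) 1, p.eval t * x t) = 0 := by
    intro p
    induction p using Polynomial.induction_on' with
    | add p q hp hq =>
      simp only [Polynomial.eval_add, add_mul]
      rw [integral_add (hmul _ p.continuous) (hmul _ q.continuous), hp, hq, add_zero]
    | monomial n c =>
      simp only [Polynomial.eval_monomial, mul_assoc]
      rw [integral_const_mul, h, mul_zero]
  have hcont : ∀ g : ℝ → ℝ, Continuous g → (∫ t in Set.Ioo (0:ℝ) 1, g t * x t) = 0 := by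
    intro g hg
    set M := ∫ t in Set.Ioo (0:ℝ) 1, |x t| with hM
    have hM0 : 0 ≤ M := integral_nonneg fun t => abs_nonneg _
    have key : ∀ ε > 0, |∫ t in Set.Ioo (0:ℝ) 1, g t * x t| ≤ ε * M := by
      intro ε hε
      obtain ⟨p, hp⟩ := exists_polynomial_near_of_continuousOn 0 1 g hg.continuousOn ε hε
      have e : (∫ t in Set.Ioo (0:ℝ) 1, g t * x t) =
          ∫ t in Set.Ioo (0:ℝ) 1, (g t * x t - p.eval t * x t) := by
        rw [integral_sub (hmul _ hg) (hmul _ p.continuous), hpoly, sub_zero]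
      rw [e, hM, ← integral_const_mul, ← Real.norm_eq_abs]
      apply norm_integral_le_of_norm_le (hint.abs.const_mul ε)
      filter_upwards [ae_restrict_mem measurableSet_Ioo] with t ht
      rw [← sub_mul, Real.norm_eq_abs, abs_mul, abs_sub_comm]
      have := (hp t ⟨ht.1.le, ht.2.le⟩).le
      gcongr
    by_contra hne
    have hpos : 0 < |∫ t in Set.Ioo (0:ℝ) 1, g t * x t| := abs_pos.2 hne
    have := key (|∫ t in Set.Ioo (0:ℝ) 1, g t * x t| / (2 * (M + 1))) (by positivity)
    rw [div_mul_eq_mul_div, le_div_iff₀ (by positivity)] at this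
    nlinarith
  have hae : ∀ᵐ t ∂(volume.restrict (Set.Ioo (0:ℝ) 1)), t ∈ Set.univ → x t = 0 := by
    apply isOpen_univ.ae_eq_zero_of_integral_contDiff_smul_eq_zero
    · exact hint.locallyIntegrable.locallyIntegrableOn _
    · intro g hg _ _
      simpa using hcont g hg.continuous
  rw [Lp.eq_zero_iff_ae_eq_zero]
  filter_upwards [hae] with t ht
  exact ht trivial

/-- Almost orthogonal sequences satisfy a lower Riesz bound. -/
lemma almost_orth {H : Type*} [NormedAddCommGroup H] [InnerProductSpace ℝ H] (v : ℕ → H)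
    (hd : ∀ k, 1 / 4 ≤ inner ℝ (v k) (v k))
    (ho : ∀ k l, k < l → |inner ℝ (v k) (v l)| ≤ (1 / 16) * ((1 / 2) ^ k * (1 / 2) ^ l))
    (s : Finset ℕ) (c : ℕ → ℝ) :
    (1 / 8) * ∑ i ∈ s, c i ^ 2 ≤ ‖∑ i ∈ s, c i • v i‖ ^ 2 := by
  have ho' : ∀ k l, k ≠ l → |inner ℝ (v k) (v l)| ≤ (1 / 16) * ((1 / 2) ^ k * (1 / 2) ^ l) := by
    intro k l hkl
    rcases lt_or_gt_of_ne hkl with h | h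
    · exact ho k l h
    · rw [real_inner_comm, mul_comm ((1 / 2 : ℝ) ^ k)]
      exact ho l k h
  have hterm : ∀ i j, (if i = j then (1 / 4) * c i ^ 2 else 0)
      - (1 / 16) * ((|c i| * (1 / 2) ^ i) * (|c j| * (1 / 2) ^ j)) ≤
      c i * (c j * inner ℝ (v i) (v j)) := by
    intro i j
    split_ifs with hij
    · subst hij
      have h1 := mul_le_mul_of_nonneg_left (hd i) (sq_nonneg (c i))
      have h2 : 0 ≤ (|c i| * (1 / 2 : ℝ) ^ i) * (|c i| * (1 / 2) ^ i) := by positivity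
      nlinarith
    · have h1 := ho' i j hij
      have h2 : |c i * (c j * inner ℝ (v i) (v j))| ≤
          |c i| * (|c j| * ((1 / 16) * ((1 / 2) ^ i * (1 / 2) ^ j))) := by
        rw [abs_mul, abs_mul]
        gcongr
      have h3 := neg_abs_le (c i * (c j * inner ℝ (v i) (v j)))
      nlinarith
  have hexp : ‖∑ i ∈ s, c i • v i‖ ^ 2 = ∑ i ∈ s, ∑ j ∈ s, c i * (c j * inner ℝ (v i) (v j)) := by
    rw [← real_inner_self_eq_norm_sq, sum_inner]
    refine Finset.sum_congr rfl fun i _ => ?_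
    rw [inner_sum]
    refine Finset.sum_congr rfl fun j _ => ?_
    rw [real_inner_smul_left, real_inner_smul_right]
  have hsum := Finset.sum_le_sum fun i (_ : i ∈ s) =>
    Finset.sum_le_sum fun j (_ : j ∈ s) => hterm i j
  rw [← hexp] at hsum
  have e1 : ∑ i ∈ s, ∑ j ∈ s, ((if i = j then (1 / 4) * c i ^ 2 else 0)
      - (1 / 16) * ((|c i| * (1 / 2) ^ i) * (|c j| * (1 / 2) ^ j))) =
      (1 / 4) * ∑ i ∈ s, c i ^ 2 - (1 / 16) * (∑ i ∈ s, |c i| * (1 / 2) ^ i) ^ 2 := by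
    simp only [Finset.sum_sub_distrib]
    congr 1
    · rw [Finset.mul_sum]
      refine Finset.sum_congr rfl fun i hi => ?_
      simp [hi]
    · rw [pow_two, Finset.sum_mul_sum, Finset.mul_sum]
      refine Finset.sum_congr rfl fun i hi => ?_
      rw [Finset.mul_sum]
  have cs := Finset.sum_mul_sq_le_sq_mul_sq s (fun i => |c i|) (fun i => (1 / 2 : ℝ) ^ i)
  simp only [sq_abs] at cs
  have hg : ∑ i ∈ s, ((1 / 2 : ℝ) ^ i) ^ 2 ≤ 2 := by
    calc ∑ i ∈ s, ((1 / 2 : ℝ) ^ i) ^ 2 ≤ ∑ i ∈ s, (1 / 2 : ℝ) ^ i := by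
          refine Finset.sum_le_sum fun i _ => ?_
          have h0 : (0 : ℝ) ≤ (1 / 2) ^ i := by positivity
          have h1 : (1 / 2 : ℝ) ^ i ≤ 1 := pow_le_one₀ (by norm_num) (by norm_num)
          nlinarith
      _ ≤ ∑' i : ℕ, (1 / 2 : ℝ) ^ i :=
          summable_geometric_two.sum_le_tsum s fun i _ => by positivity
      _ = 2 := tsum_geometric_two
  have hS : 0 ≤ ∑ i ∈ s, c i ^ 2 := Finset.sum_nonneg fun i _ => sq_nonneg _
  rw [e1] at hsum
  nlinarith [mul_le_mul_of_nonneg_left hg hS]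

/-- The lacunary scale. -/
noncomputable def rSeq (k : ℕ) : ℝ := (1 / 2) ^ (5 * k ^ 2 + 1)

lemma rSeq_pos (k : ℕ) : 0 < rSeq k := by unfold rSeq; positivity

lemma rSeq_le (k : ℕ) : rSeq k ≤ 1 / 2 := by
  unfold rSeq
  calc (1 / 2 : ℝ) ^ (5 * k ^ 2 + 1) ≤ (1 / 2) ^ 1 :=
        pow_le_pow_of_le_one (by norm_num) (by norm_num) (by omega)
    _ = 1 / 2 := by norm_num

lemma rSeq_lt {k l : ℕ} (h : k < l) :
    rSeq l ≤ (1 / 16) * ((1 / 2) ^ k * (1 / 2) ^ l) * rSeq k := by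
  unfold rSeq
  have : (1 / 16 : ℝ) = (1 / 2) ^ 4 := by norm_num
  rw [this, ← pow_add, ← pow_add, ← pow_add]
  apply pow_le_pow_of_le_one (by norm_num) (by norm_num)
  nlinarith

/-- The orthonormal sequence. -/
noncomputable def psiSeq (k : ℕ) : Lp ℝ 2 (volume.restrict (Set.Ioo (0:ℝ) 1)) :=
  psiInd (1 - 2 * rSeq k ^ 2) (1 - rSeq k ^ 2) (rSeq k)⁻¹

lemma psiSeq_orthonormal : Orthonormal ℝ psiSeq := by
  have hlt : ∀ k l, k < l → inner ℝ (psiSeq k) (psiSeq l) = 0 := by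
    intro k l h
    apply psiInd_inner_disj
    have h1 := rSeq_lt h
    have h2 := rSeq_pos k
    have h3 := rSeq_pos l
    have h4 : (1 / 2 : ℝ) ^ k * (1 / 2) ^ l ≤ 1 :=
      mul_le_one₀ (pow_le_one₀ (by norm_num) (by norm_num)) (by positivity)
        (pow_le_one₀ (by norm_num) (by norm_num))
    have h5 : rSeq l ≤ (1 / 16) * rSeq k := by nlinarith
    nlinarith
  refine ⟨fun k => ?_, fun k l hkl => ?_⟩
  · have h2 := rSeq_pos k
    have h3 := rSeq_le k
    apply psiInd_inner_self <;> nlinarith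
  · rcases lt_or_gt_of_ne hkl with h | h
    · exact hlt k l h
    · rw [real_inner_comm]
      exact hlt l k h

lemma psiSeq_moment (k j : ℕ) :
    rSeq k * (1 - 2 * rSeq k ^ 2) ^ j ≤ (∫ t in Set.Ioo (0:ℝ) 1, t ^ j * psiSeq k t) ∧
    (∫ t in Set.Ioo (0:ℝ) 1, t ^ j * psiSeq k t) ≤ rSeq k * (1 - rSeq k ^ 2) ^ j := by
  have h2 := rSeq_pos k
  have h3 := rSeq_le k
  apply psiInd_moment <;> nlinarith

lemma A_diag
    (A : Lp ℝ 2 (volume.restrict (Set.Ioo (0:ℝ) 1)) →L[ℝ] lp (fun _ : ℕ => ℝ) 2)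
    (hA : ∀ (x : Lp ℝ 2 (volume.restrict (Set.Ioo (0:ℝ) 1))) (j : ℕ),
      (A x : ℕ → ℝ) j = ∫ t in Set.Ioo (0:ℝ) 1, t ^ j * x t)
    (k : ℕ) : 1 / 4 ≤ inner ℝ (A (psiSeq k)) (A (psiSeq k)) := by
  have h2 := rSeq_pos k
  have h3 := rSeq_le k
  set r := rSeq k with hr
  have hs := lp.hasSum_inner (𝕜 := ℝ) (A (psiSeq k)) (A (psiSeq k))
  have q0 : 0 ≤ 1 - 2 * r ^ 2 := by nlinarith
  have q1 : (1 - 2 * r ^ 2) ^ 2 < 1 := by nlinarith [sq_pos_of_pos h2]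
  have hg := (hasSum_geometric_of_lt_one (sq_nonneg (1 - 2 * r ^ 2)) q1).mul_left (r ^ 2)
  have hle : r ^ 2 * (1 - (1 - 2 * r ^ 2) ^ 2)⁻¹ ≤ inner ℝ (A (psiSeq k)) (A (psiSeq k)) := by
    refine hasSum_le (fun j => ?_) hg hs
    have hm := (psiSeq_moment k j).1
    rw [← hA, ← hr] at hm
    have hn : 0 ≤ r * (1 - 2 * r ^ 2) ^ j := by positivity
    have : r ^ 2 * ((1 - 2 * r ^ 2) ^ 2) ^ j = (r * (1 - 2 * r ^ 2) ^ j) ^ 2 := by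
      rw [mul_pow, ← pow_mul, ← pow_mul, mul_comm 2 j]
    rw [this]
    simp only [real_inner_self_eq_norm_sq, Real.norm_eq_abs, sq_abs]
    gcongr
  refine le_trans ?_ hle
  rw [← div_eq_mul_inv, le_div_iff₀ (by linarith)]
  nlinarith [sq_nonneg (r ^ 2)]

lemma A_off
    (A : Lp ℝ 2 (volume.restrict (Set.Ioo (0:ℝ) 1)) →L[ℝ] lp (fun _ : ℕ => ℝ) 2)
    (hA : ∀ (x : Lp ℝ 2 (volume.restrict (Set.Ioo (0:ℝ) 1))) (j : ℕ),
      (A x : ℕ → ℝ) j = ∫ t in Set.Ioo (0:ℝ) 1, t ^ j * x t)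
    {k l : ℕ} (h : k < l) :
    |inner ℝ (A (psiSeq k)) (A (psiSeq l))| ≤ (1 / 16) * ((1 / 2) ^ k * (1 / 2) ^ l) := by
  have k2 := rSeq_pos k
  have k3 := rSeq_le k
  have l2 := rSeq_pos l
  have l3 := rSeq_le l
  have hkl := rSeq_lt h
  have hs := lp.hasSum_inner (𝕜 := ℝ) (A (psiSeq k)) (A (psiSeq l))
  have hpos : ∀ n j, 0 ≤ (A (psiSeq n) : ℕ → ℝ) j := by
    intro n j
    have hm := (psiSeq_moment n j).1
    rw [← hA] at hm
    refine le_trans ?_ hm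
    have n2 := rSeq_pos n
    have n3 := rSeq_le n
    have q0 : 0 ≤ 1 - 2 * rSeq n ^ 2 := by nlinarith
    positivity
  have hnn : 0 ≤ inner ℝ (A (psiSeq k)) (A (psiSeq l)) :=
    hs.nonneg fun j => by
      have := mul_nonneg (hpos l j) (hpos k j)
      simpa using this
  rw [abs_of_nonneg hnn]
  have q0 : 0 ≤ 1 - rSeq k ^ 2 := by nlinarith
  have hg := (hasSum_geometric_of_lt_one q0 (by nlinarith)).mul_left (rSeq k * rSeq l)
  have hle : inner ℝ (A (psiSeq k)) (A (psiSeq l)) ≤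
      rSeq k * rSeq l * (1 - (1 - rSeq k ^ 2))⁻¹ := by
    refine hasSum_le (fun j => ?_) hs hg
    have hk := (psiSeq_moment k j).2
    have hl := (psiSeq_moment l j).2
    rw [← hA] at hk hl
    have hl' : (A (psiSeq l) : ℕ → ℝ) j ≤ rSeq l := by
      refine hl.trans (mul_le_of_le_one_right l2.le (pow_le_one₀ ?_ ?_)) <;> nlinarith
    have := mul_le_mul hk hl' (hpos l j) (by positivity)
    have e : inner ℝ ((A (psiSeq k) : ℕ → ℝ) j) ((A (psiSeq l) : ℕ → ℝ) j) =
      (A (psiSeq k) : ℕ → ℝ) j * (A (psiSeq l) : ℕ → ℝ) j := by simp [mul_comm]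
    rw [e]
    linarith
  refine hle.trans ?_
  rw [← div_eq_mul_inv, div_le_iff₀ (by nlinarith)]
  nlinarith

/-- `A` composed with a suitable isometry is bounded below. -/
lemma exists_T
    (A : Lp ℝ 2 (volume.restrict (Set.Ioo (0:ℝ) 1)) →L[ℝ] lp (fun _ : ℕ => ℝ) 2)
    (hA : ∀ (x : Lp ℝ 2 (volume.restrict (Set.Ioo (0:ℝ) 1))) (j : ℕ),
      (A x : ℕ → ℝ) j = ∫ t in Set.Ioo (0:ℝ) 1, t ^ j * x t)
    : ∃ V : lp (fun _ : ℕ => ℝ) 2 →L[ℝ] Lp ℝ 2 (volume.restrict (Set.Ioo (0:ℝ) 1)),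
    AntilipschitzWith 3 (A.comp V) := by
  let V := psiSeq_orthonormal.orthogonalFamily.linearIsometry
  refine ⟨V.toContinuousLinearMap, ?_⟩
  apply ContinuousLinearMap.antilipschitz_of_bound
  intro x
  have hV : ∀ (i : ℕ) (c : ℝ), V (lp.single 2 i c) = c • psiSeq i := by
    intro i c
    simp [V]
  have hx := lp.hasSum_single (p := 2) (by norm_num) x
  have h1 : HasSum (fun i => A (V (lp.single 2 i (x i)))) (A (V x)) :=
    (hx.mapL V.toContinuousLinearMap).mapL A
  have h2 : HasSum (fun i => x i ^ 2) (‖x‖ ^ 2) := by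
    have := lp.hasSum_inner (𝕜 := ℝ) x x
    rw [real_inner_self_eq_norm_sq] at this
    simpa using this
  have h3 : (1 / 8) * ‖x‖ ^ 2 ≤ ‖A (V x)‖ ^ 2 := by
    refine le_of_tendsto_of_tendsto (Filter.Tendsto.const_mul _ h2)
      ((Filter.Tendsto.norm h1).pow 2) ?_
    refine Filter.Eventually.of_forall fun s => ?_
    have := almost_orth (fun k => A (psiSeq k)) (A_diag A hA) (fun k l h => A_off A hA h) s x
    simpa [hV] using this
  have h4 : ‖x‖ ≤ 3 * ‖A (V x)‖ := by
    refine (pow_le_pow_iff_left₀ (norm_nonneg _) (by positivity) two_ne_zero).1 ?_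
    nlinarith [sq_nonneg ‖A (V x)‖]
  simpa using h4

lemma A_inj
    (A : Lp ℝ 2 (volume.restrict (Set.Ioo (0:ℝ) 1)) →L[ℝ] lp (fun _ : ℕ => ℝ) 2)
    (hA : ∀ (x : Lp ℝ 2 (volume.restrict (Set.Ioo (0:ℝ) 1))) (j : ℕ),
      (A x : ℕ → ℝ) j = ∫ t in Set.Ioo (0:ℝ) 1, t ^ j * x t)
    : Function.Injective A := by
  rw [injective_iff_map_eq_zero]
  intro x hx
  apply moments_zero
  intro j
  rw [← hA, hx]
  simp

lemma not_closed
    (A : Lp ℝ 2 (volume.restrict (Set.Ioo (0:ℝ) 1)) →L[ℝ] lp (fun _ : ℕ => ℝ) 2)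
    (hA : ∀ (x : Lp ℝ 2 (volume.restrict (Set.Ioo (0:ℝ) 1))) (j : ℕ),
      (A x : ℕ → ℝ) j = ∫ t in Set.Ioo (0:ℝ) 1, t ^ j * x t)
    : ¬ IsClosed (Set.range A) := by
  intro hc
  obtain ⟨K, hK⟩ := A.antilipschitz_of_injective_of_isClosed_range (A_inj A hA) hc
  have key : ∀ r : ℝ, 0 < r → r ≤ 1 / 2 → 1 ≤ (K : ℝ) ^ 2 * (2 * r ^ 2) := by
    intro r hr hr2
    have hb : r ^ 2 ≤ 1 / 4 := by nlinarith
    have hn : ‖psiInd 0 (r ^ 2) r⁻¹‖ = 1 :=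
      psiInd_inner_self le_rfl hr (by ring) (by linarith)
    have h1 : ‖psiInd 0 (r ^ 2) r⁻¹‖ ≤ K * ‖A (psiInd 0 (r ^ 2) r⁻¹)‖ :=
      ZeroHomClass.bound_of_antilipschitz A hK _
    rw [hn] at h1
    have h2 : ‖A (psiInd 0 (r ^ 2) r⁻¹)‖ ^ 2 ≤ 2 * r ^ 2 := by
      have hs := lp.hasSum_inner (𝕜 := ℝ) (A (psiInd 0 (r ^ 2) r⁻¹)) (A (psiInd 0 (r ^ 2) r⁻¹))
      rw [real_inner_self_eq_norm_sq] at hs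
      have hg := (hasSum_geometric_two).mul_left (r ^ 2)
      rw [mul_comm 2]
      refine hasSum_le (fun j => ?_) hs hg
      have hm := psiInd_moment (a := 0) (b := r ^ 2) le_rfl hr (by ring) (by linarith) j
      rw [← hA] at hm
      have hm0 : 0 ≤ (A (psiInd 0 (r ^ 2) r⁻¹) : ℕ → ℝ) j := le_trans (by positivity) hm.1
      rw [real_inner_self_eq_norm_sq, Real.norm_eq_abs, sq_abs]
      calc ((A (psiInd 0 (r ^ 2) r⁻¹) : ℕ → ℝ) j) ^ 2 ≤ (r * (r ^ 2) ^ j) ^ 2 := by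
            have := hm.2
            gcongr
        _ = r ^ 2 * (r ^ 4) ^ j := by ring
        _ ≤ r ^ 2 * (1 / 2) ^ j := by
            have : r ^ 4 ≤ 1 / 2 := by nlinarith [sq_nonneg r]
            gcongr
    calc (1 : ℝ) ≤ (K * ‖A (psiInd 0 (r ^ 2) r⁻¹)‖) ^ 2 := one_le_pow₀ h1
      _ = K ^ 2 * ‖A (psiInd 0 (r ^ 2) r⁻¹)‖ ^ 2 := by ring
      _ ≤ _ := by gcongr
  have hK0 : (0 : ℝ) ≤ K := K.2
  have := key (1 / (2 * (K + 1))) (by positivity) (by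
    rw [div_le_div_iff₀ (by positivity) (by norm_num)]; linarith)
  have e : (K : ℝ) ^ 2 * (2 * (1 / (2 * (K + 1))) ^ 2) = K ^ 2 / (2 * (K + 1) ^ 2) := by
    field_simp
  rw [e, le_div_iff₀ (by positivity)] at this
  nlinarith

lemma lp_infinite : ¬ FiniteDimensional ℝ (lp (fun _ : ℕ => ℝ) 2) := by
  intro h
  have ho : Orthonormal ℝ (fun i : ℕ => (lp.single 2 i (1 : ℝ) : lp (fun _ : ℕ => ℝ) 2)) := by
    refine ⟨fun i => ?_, fun i j hij => ?_⟩
    · rw [lp.norm_single (by norm_num)]; simp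
    · change inner ℝ (lp.single 2 i (1 : ℝ) : lp (fun _ : ℕ => ℝ) 2) (lp.single 2 j (1 : ℝ)) = 0
      rw [lp.inner_single_left]
      simp [lp.single_apply, hij]
  have := ho.linearIndependent.finite
  exact not_finite ℕ

/-- The Hausdorff moment problem is ill-posed of type I in the sense of Nashed:
the moment operator `A : L²(0,1) → ℓ²` has non-closed range, is non-compact, and its range
contains an infinite-dimensional closed subspace. -/
theorem stmt8
    (A : Lp ℝ 2 (volume.restrict (Set.Ioo (0:ℝ) 1)) →L[ℝ] lp (fun _ : ℕ => ℝ) 2)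
    (hA : ∀ (x : Lp ℝ 2 (volume.restrict (Set.Ioo (0:ℝ) 1))) (j : ℕ),
      (A x : ℕ → ℝ) j = ∫ t in Set.Ioo (0:ℝ) 1, t ^ j * x t) :
    ¬ IsClosed ((LinearMap.range (A : Lp ℝ 2 (volume.restrict (Set.Ioo (0:ℝ) 1)) →ₗ[ℝ]
        lp (fun _ : ℕ => ℝ) 2) : Submodule ℝ (lp (fun _ : ℕ => ℝ) 2)) :
          Set (lp (fun _ : ℕ => ℝ) 2)) ∧
    ¬ IsCompactOperator (A : Lp ℝ 2 (volume.restrict (Set.Ioo (0:ℝ) 1)) →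
        lp (fun _ : ℕ => ℝ) 2) ∧
    ∃ Z : Submodule ℝ (lp (fun _ : ℕ => ℝ) 2), IsClosed (Z : Set (lp (fun _ : ℕ => ℝ) 2)) ∧
      ¬ FiniteDimensional ℝ Z ∧
      Z ≤ LinearMap.range (A : Lp ℝ 2 (volume.restrict (Set.Ioo (0:ℝ) 1)) →ₗ[ℝ]
        lp (fun _ : ℕ => ℝ) 2) := by
  obtain ⟨V, hT⟩ := exists_T A hA
  have hemb := hT.isClosedEmbedding (A.comp V).uniformContinuous
  refine ⟨?_, ?_, LinearMap.range ((A.comp V : lp (fun _ : ℕ => ℝ) 2 →L[ℝ] _) :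
      lp (fun _ : ℕ => ℝ) 2 →ₗ[ℝ] lp (fun _ : ℕ => ℝ) 2), ?_, ?_, ?_⟩
  · exact not_closed A hA
  · intro hc
    obtain ⟨K, hK, hK'⟩ := hc.comp_clm V
    apply lp_infinite
    apply FiniteDimensional.of_isCompactOperator_id (𝕜 := ℝ)
    exact ⟨(A.comp V) ⁻¹' K, hemb.isCompact_preimage hK, hK'⟩
  · exact hemb.isClosed_range
  · intro hfin
    apply lp_infinite
    exact (LinearEquiv.ofInjective ((A.comp V : lp (fun _ : ℕ => ℝ) 2 →L[ℝ] _) :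
      lp (fun _ : ℕ => ℝ) 2 →ₗ[ℝ] lp (fun _ : ℕ => ℝ) 2) hT.injective).symm.finiteDimensional
  · rintro _ ⟨x, rfl⟩
    exact ⟨V x, rfl⟩
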